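/- A vector x ∈ ℤ_{≥0}^n is the degree sequence of some k-uniform multi-hypergraph on the vertex set {1, …, n} if and only if k · T_{n,k}(x) = Σ_{i=1}^n x_i. -/

import Mathlib

/-- A move in Exact k-Nim `Nim^=_{n,k}`: all piles weakly decrease and
exactly `k` piles strictly decrease. -/
def ExactMove (n k : ℕ) (x x' : Fin n → ℕ) : Prop :=
  (∀ i, x' i ≤ x i) ∧ (Finset.univ.filter fun i => x' i < x i).card = k

/-- There is a chain of `m` consecutive moves starting at `x`. -/
def HasChain (n k : ℕ) (x : Fin n → ℕ) (m : ℕ) : Prop :=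
  ∃ f : Fin (m + 1) → Fin n → ℕ, f 0 = x ∧
    ∀ i : Fin m, ExactMove n k (f i.castSucc) (f i.succ)

/-- The Tetris function `T_{n,k}(x)`: the maximum number of consecutive moves
that can be made starting from `x`. -/
noncomputable def tetris (n k : ℕ) (x : Fin n → ℕ) : ℕ :=
  sSup {m | HasChain n k x m}

theorem hasChain_zero (n k : ℕ) (x : Fin n → ℕ) : HasChain n k x 0 :=
  ⟨fun _ => x, rfl, fun i => i.elim0⟩

theorem hasChain_succ (n k : ℕ) (x : Fin n → ℕ) (m : ℕ) :
    HasChain n k x (m + 1) ↔ ∃ y, ExactMove n k x y ∧ HasChain n k y m := by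
  constructor
  · rintro ⟨f, hf, h⟩
    refine ⟨f 1, ?_, fun i => f i.succ, rfl, fun i => ?_⟩
    · have := h 0
      simpa [hf] using this
    · have := h i.succ
      simpa using this
  · rintro ⟨y, hy, f, hf, h⟩
    refine ⟨Fin.cons x f, rfl, fun i => ?_⟩
    refine Fin.cases ?_ (fun j => ?_) i
    · simpa [hf] using hy
    · have := h j
      rw [← Fin.succ_castSucc, Fin.cons_succ, Fin.cons_succ]
      exact this

theorem move_pointwise {n k : ℕ} {x y : Fin n → ℕ} (h : ExactMove n k x y) (i : Fin n) :
    y i + (if y i < x i then 1 else 0) ≤ x i := by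
  have := h.1 i
  split_ifs <;> omega

theorem move_sum' {n k : ℕ} {x y : Fin n → ℕ} (h : ExactMove n k x y) :
    ∑ i, (y i + (if y i < x i then 1 else 0)) = ∑ i, y i + k := by
  rw [Finset.sum_add_distrib, ← Finset.card_filter, h.2]

theorem move_sum {n k : ℕ} {x y : Fin n → ℕ} (h : ExactMove n k x y) :
    ∑ i, y i + k ≤ ∑ i, x i := by
  rw [← move_sum' h]
  exact Finset.sum_le_sum fun i _ => move_pointwise h i

theorem chain_bound {n k : ℕ} (m : ℕ) : ∀ {x : Fin n → ℕ}, HasChain n k x m →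
    k * m ≤ ∑ i, x i := by
  induction m with
  | zero => intro x _; simp
  | succ m ih =>
    intro x h
    obtain ⟨y, hy, hc⟩ := (hasChain_succ n k x m).1 h
    have h1 := ih hc
    have h2 := move_sum hy
    rw [Nat.mul_succ]
    omega

theorem chain_to_graph {n k : ℕ} (m : ℕ) : ∀ {x : Fin n → ℕ}, HasChain n k x m →
    k * m = ∑ i, x i → ∃ H : Multiset (Finset (Fin n)), (∀ e ∈ H, e.card = k) ∧
        ∀ i : Fin n, (H.filter fun e => i ∈ e).card = x i := by
  induction m with
  | zero =>
    intro x _ h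
    refine ⟨0, by simp, fun i => ?_⟩
    have h' : ∑ i, x i = 0 := by simpa using h.symm
    have := (Finset.sum_eq_zero_iff.1 h') i (Finset.mem_univ i)
    simp [this]
  | succ m ih =>
    intro x h hs
    obtain ⟨y, hy, hc⟩ := (hasChain_succ n k x m).1 h
    have h1 := chain_bound m hc
    have h2 := move_sum hy
    rw [Nat.mul_succ] at hs
    obtain ⟨H, hH, hd⟩ := ih hc (by omega)
    have h3 : ∑ i, (y i + (if y i < x i then 1 else 0)) = ∑ i, x i := by
      rw [move_sum' hy]; omega
    have h4 := (Finset.sum_eq_sum_iff_of_le fun i _ => move_pointwise hy i).1 h3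
    refine ⟨(Finset.univ.filter fun i => y i < x i) ::ₘ H, ?_, fun i => ?_⟩
    · intro e he
      rcases Multiset.mem_cons.1 he with rfl | he
      · exact hy.2
      · exact hH e he
    · rw [← h4 i (Finset.mem_univ i), ← hd i, Multiset.filter_cons, Multiset.card_add, hd i, add_comm]
      by_cases hi : y i < x i <;> simp [hi]

theorem graph_to_chain {n k : ℕ} (H : Multiset (Finset (Fin n))) :
    ∀ {x : Fin n → ℕ}, (∀ e ∈ H, e.card = k) →
      (∀ i : Fin n, (H.filter fun e => i ∈ e).card = x i) →
      HasChain n k x H.card ∧ k * H.card = ∑ i, x i := by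
  induction H using Multiset.induction_on with
  | empty =>
    intro x _ h
    refine ⟨hasChain_zero n k x, ?_⟩
    simp [← h]
  | cons e H ih =>
    intro x hH hd
    obtain ⟨hc, hs⟩ := ih (x := fun i => (H.filter fun e => i ∈ e).card)
      (fun e he => hH e (Multiset.mem_cons_of_mem he)) (fun i => rfl)
    have hx : ∀ i, x i = (H.filter fun e => i ∈ e).card + if i ∈ e then 1 else 0 := by
      intro i
      rw [← hd i, Multiset.filter_cons, Multiset.card_add, add_comm]
      by_cases hi : i ∈ e <;> simp [hi]
    have hek : e.card = k := hH e (Multiset.mem_cons_self e H)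
    rw [Multiset.card_cons]
    constructor
    · refine (hasChain_succ n k x _).2 ⟨_, ⟨fun i => ?_, ?_⟩, hc⟩
      · rw [hx i]; omega
      · rw [← hek]
        congr 1
        ext i
        simp only [Finset.mem_filter, Finset.mem_univ, true_and, hx i]
        by_cases hi : i ∈ e <;> simp [hi]
    · simp_rw [hx]
      rw [Finset.sum_add_distrib, ← hs, ← Finset.card_filter, Nat.mul_succ]
      simp [hek]

/-- A vector `x` is the degree sequence of a `k`-uniform multi-hypergraph on `n`
vertices iff `k · T_{n,k}(x) = Σᵢ xᵢ`. -/
theorem degree_sequence_iff_tetris (n k : ℕ) (hk1 : 1 ≤ k) (hkn : k ≤ n)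
    (x : Fin n → ℕ) :
    (∃ H : Multiset (Finset (Fin n)), (∀ e ∈ H, e.card = k) ∧
        ∀ i : Fin n, (H.filter fun e => i ∈ e).card = x i) ↔
      k * tetris n k x = ∑ i, x i := by
  have hne : {m | HasChain n k x m}.Nonempty := ⟨0, hasChain_zero n k x⟩
  have hb : BddAbove {m | HasChain n k x m} :=
    ⟨∑ i, x i, fun m hm => (Nat.le_mul_of_pos_left m hk1).trans (chain_bound m hm)⟩
  have hmem : HasChain n k x (tetris n k x) := Nat.sSup_mem hne hb
  constructor
  · rintro ⟨H, hH, hd⟩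
    obtain ⟨hc, hs⟩ := graph_to_chain H hH hd
    have hle : H.card ≤ tetris n k x := le_csSup hb hc
    exact le_antisymm (chain_bound _ hmem) (hs ▸ Nat.mul_le_mul_left k hle)
  · exact chain_to_graph _ hmem
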